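/- (Kummer's second quadratic identity) Let β₁, β₂ be real numbers with β₁ > 0 and β₂ > 0, and let Λ be a real number with 0 < Λ < 3 − 2√2. Then ₂F₁(β₁+β₂−1/2, β₂; 2β₂; 1 − ((1+Λ)/(1−Λ))²) = (1−Λ)^{2β₁+2β₂−1} · ₂F₁(β₁+β₂−1/2, β₁; β₂+1/2; Λ²). (Note 1 − ((1+Λ)/(1−Λ))² = −4Λ/(1−Λ)², which has absolute value less than 1 exactly when Λ < 3 − 2√2.) -/

import Mathlib

/-- Pochhammer symbol `(x)_n` in `ℝ`. -/
noncomputable def rpoch (x : ℝ) (n : ℕ) : ℝ := (ascPochhammer ℝ n).eval x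

/-- Gauss' hypergeometric series `₂F₁` (real). -/
noncomputable def hyp2F1 (a b c z : ℝ) : ℝ :=
  ∑' n : ℕ, rpoch a n * rpoch b n / (rpoch c n * (n.factorial : ℝ)) * z ^ n

/-!
Expand `(1 - x) ^ (-2a) * ₂F₁(a, b; 2b; -4x / (1 - x) ^ 2)` in powers of `x`. After the change of
variables, the hypergeometric operator sends the `n`-th term of the series to `1 - X ^ 2` times a
difference of consecutive members of a sequence `H` of power series with `X ^ n ∣ H n`, so the sum
over `n` telescopes to `0`. The resulting equation is a recurrence relating the coefficients of
`X ^ m` and `X ^ (m + 2)`: the odd coefficients vanish and the even ones are those of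
`₂F₁(a, a - b + 1/2; b + 1/2; x ^ 2)`. The rearrangement into powers of `x` is legitimate where the
double series converges absolutely, which is the case for `4|x| / (1 - |x|) ^ 2 < 1`.
-/

section Formal

open PowerSeries

section BinomialRing

variable {R : Type*} [CommRing R] [BinomialRing R]

lemma succ_mul_multichoose_succ (s : R) (k : ℕ) :
    ((k : R) + 1) * Ring.multichoose s (k + 1) = s * Ring.multichoose (s + 1) k := by
  have := BinomialRing.toIsAddTorsionFree (R := R)
  apply nsmul_right_injective k.factorial_ne_zero
  have hs := Ring.factorial_nsmul_multichoose_eq_ascPochhammer s (k + 1)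
  have hs1 := Ring.factorial_nsmul_multichoose_eq_ascPochhammer (s + 1) k
  rw [Polynomial.ascPochhammer_smeval_eq_eval] at hs hs1
  simp only [ascPochhammer_succ_left, Polynomial.eval_mul, Polynomial.eval_X, Polynomial.eval_comp,
    Polynomial.eval_add, Polynomial.eval_one, nsmul_eq_mul, Nat.factorial_succ, Nat.cast_mul,
    Nat.cast_succ] at hs hs1 ⊢
  linear_combination hs - s * hs1

/-- The Taylor series of `(1 - x) ^ (-s)` at `0`. -/
noncomputable def negBinomialSeries (s : R) : R⟦X⟧ :=
  PowerSeries.mk (Ring.multichoose s)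

lemma coeff_negBinomialSeries (s : R) (k : ℕ) :
    coeff k (negBinomialSeries s) = Ring.multichoose s k :=
  coeff_mk _ _

lemma one_sub_X_mul_negBinomialSeries_add_one (s : R) :
    (1 - X) * negBinomialSeries (s + 1) = negBinomialSeries s := by
  ext k
  cases k with
  | zero =>
    rw [sub_mul, one_mul, map_sub, coeff_zero_X_mul, sub_zero]
    simp only [coeff_negBinomialSeries, Ring.multichoose_zero_right]
  | succ k =>
    simp [sub_mul, coeff_succ_X_mul, coeff_negBinomialSeries, Ring.multichoose_succ_succ]

lemma derivative_negBinomialSeries (s : R) :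
    d⁄dX R (negBinomialSeries s) = C s * negBinomialSeries (s + 1) := by
  ext k
  rw [coeff_derivative, coeff_C_mul, coeff_negBinomialSeries, coeff_negBinomialSeries,
    ← succ_mul_multichoose_succ, mul_comm]

/-- The Taylor series at `0` of `(1 - x) ^ (-s) * (x / (1 - x) ^ 2) ^ n`, that is, of the `n`-th
power of the Koebe function with the weight `(1 - x) ^ (-s)`. -/
noncomputable def koebePow (s : R) (n : ℕ) : R⟦X⟧ :=
  X ^ n * negBinomialSeries (s + 2 * n)

lemma coeff_koebePow_add (s : R) (n k : ℕ) :
    coeff (k + n) (koebePow s n) = Ring.multichoose (s + 2 * n) k := by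
  rw [koebePow, coeff_X_pow_mul, coeff_negBinomialSeries]

lemma coeff_koebePow_of_lt (s : R) {n m : ℕ} (h : m < n) : coeff m (koebePow s n) = 0 := by
  rw [koebePow, coeff_X_pow_mul', if_neg h.not_ge]

/-- The Taylor series at `0` of `(1 - x) ^ (-s) * ∑ n, u n * (x / (1 - x) ^ 2) ^ n`. As
`koebePow s n` is divisible by `X ^ n`, only the terms with `n ≤ m` contribute to the coefficient of
`X ^ m`. -/
noncomputable def koebeTransform (s : R) (u : ℕ → R) : R⟦X⟧ :=
  PowerSeries.mk fun m => ∑ n ∈ Finset.range (m + 1), u n * coeff m (koebePow s n)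

lemma coeff_koebeTransform (s : R) (u : ℕ → R) {m N : ℕ} (h : m < N) :
    coeff m (koebeTransform s u) = ∑ n ∈ Finset.range N, u n * coeff m (koebePow s n) := by
  rw [koebeTransform, coeff_mk]
  refine Finset.sum_subset (Finset.range_mono h) fun n _ hn => ?_
  rw [coeff_koebePow_of_lt s (by simpa using hn), mul_zero]

end BinomialRing

section EulerOperator

variable {R : Type*} [CommRing R]

/-- The Euler operator `θ = X * d/dX` on formal power series. -/
noncomputable def eulerDerivation (R : Type*) [CommRing R] : Derivation R R⟦X⟧ R⟦X⟧ :=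
  (X : R⟦X⟧) • d⁄dX R

lemma eulerDerivation_apply (f : R⟦X⟧) : eulerDerivation R f = X * d⁄dX R f := rfl

lemma coeff_eulerDerivation (f : R⟦X⟧) (m : ℕ) :
    coeff m (eulerDerivation R f) = m * coeff m f := by
  cases m with
  | zero => simp [eulerDerivation_apply]
  | succ m =>
    rw [eulerDerivation_apply, coeff_succ_X_mul, coeff_derivative, Nat.cast_succ, mul_comm]

lemma eulerDerivation_X_pow (n : ℕ) : eulerDerivation R (X ^ n) = (n : R) • X ^ n := by
  ext m
  rw [coeff_eulerDerivation, coeff_smul, smul_eq_mul, coeff_X_pow]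
  split_ifs with h
  · rw [h]
  · simp only [mul_zero]

/-- The differential operator `θ (θ + 2b - 1) - X² (θ + 2a) (θ + 2a - 2b + 1)`, where `θ` is the
Euler operator. Up to a factor `1 - X²`, it is what the hypergeometric operator with parameters
`a, b; 2b` becomes under the substitution `z = -4x / (1 - x)²` and multiplication by
`(1 - x) ^ (-2a)`. -/
noncomputable def kummerOperator (a b : R) (f : R⟦X⟧) : R⟦X⟧ :=
  let θ := eulerDerivation R
  θ (θ f) + (2 * b - 1) • θ f -
    X ^ 2 * (θ (θ f) + (4 * a - 2 * b + 1) • θ f + (2 * a * (2 * a - 2 * b + 1)) • f)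

lemma coeff_kummerOperator (a b : R) (f : R⟦X⟧) (m : ℕ) :
    coeff (m + 2) (kummerOperator a b f) =
      (m + 2) * (m + 2 * b + 1) * coeff (m + 2) f -
        (m + 2 * a) * (m + 2 * a - 2 * b + 1) * coeff m f := by
  simp only [kummerOperator, map_sub, map_add, coeff_X_pow_mul, coeff_smul, smul_eq_mul,
    coeff_eulerDerivation]
  push_cast
  ring

end EulerOperator

section KummerEquation

variable {R : Type*} [CommRing R] [BinomialRing R]

lemma eulerDerivation_X_pow_mul_negBinomialSeries (s : R) (n : ℕ) :
    eulerDerivation R (X ^ n * negBinomialSeries s) =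
      (n : R) • (X ^ n * negBinomialSeries s) +
        s • (X ^ (n + 1) * negBinomialSeries (s + 1)) := by
  rw [Derivation.leibniz, eulerDerivation_X_pow, eulerDerivation_apply,
    derivative_negBinomialSeries]
  simp only [smul_eq_mul, smul_eq_C_mul]
  ring

lemma kummerOperator_koebePow (a b : R) (n : ℕ) :
    kummerOperator a b (koebePow (2 * a) n) =
      (1 - X ^ 2) * ((n * (n + 2 * b - 1)) • koebePow (2 * a) n +
        (4 * ((a + n) * (b + n))) • koebePow (2 * a) (n + 1)) := by
  set s : R := 2 * a + 2 * n with hs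
  have h_succ : 2 * a + 2 * ((n + 1 : ℕ) : R) = s + 1 + 1 := by rw [hs]; push_cast; ring
  simp only [kummerOperator, koebePow, h_succ, ← hs, eulerDerivation_X_pow_mul_negBinomialSeries,
    map_add, Derivation.map_smul]
  rw [← one_sub_X_mul_negBinomialSeries_add_one s,
    ← one_sub_X_mul_negBinomialSeries_add_one (s + 1)]
  simp only [hs, smul_eq_C_mul, map_add, map_mul, map_sub, map_natCast, map_one, map_ofNat]
  push_cast
  ring

theorem koebeTransform_recurrence {a b : R} {u : ℕ → R}
    (hu : ∀ n : ℕ, (n + 1) * (n + 2 * b) * u (n + 1) = -4 * ((a + n) * (b + n)) * u n) (m : ℕ) :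
    (m + 2) * (m + 2 * b + 1) * coeff (m + 2) (koebeTransform (2 * a) u) =
      (m + 2 * a) * (m + 2 * a - 2 * b + 1) * coeff m (koebeTransform (2 * a) u) := by
  let H (n : ℕ) : R⟦X⟧ := (n * (n + 2 * b - 1) * u n) • koebePow (2 * a) n
  have h_step (n : ℕ) : u n • kummerOperator a b (koebePow (2 * a) n) =
      (1 - X ^ 2) * (H n - H (n + 1)) := by
    have hC := congrArg (C (R := R)) (hu n)
    simp only [H, kummerOperator_koebePow]
    simp only [smul_eq_C_mul, map_mul, map_add, map_sub, map_neg, map_natCast, map_one, map_ofNat,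
      Nat.cast_succ] at hC ⊢
    linear_combination (1 - X ^ 2) * koebePow (2 * a) (n + 1) * hC
  have h_tail : coeff (m + 2) ((1 - X ^ 2) * H (m + 3)) = 0 := by
    simp only [H, sub_mul, one_mul, map_sub, coeff_X_pow_mul, coeff_smul]
    rw [coeff_koebePow_of_lt _ (by lia), coeff_koebePow_of_lt _ (by lia)]
    ring
  have h_sum : ∑ n ∈ Finset.range (m + 3), u n • kummerOperator a b (koebePow (2 * a) n) =
      -((1 - X ^ 2) * H (m + 3)) := by
    rw [Finset.sum_congr rfl fun n _ => h_step n, ← Finset.mul_sum, Finset.sum_range_sub']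
    simp [H]
  have h_coeff := congrArg (coeff (m + 2)) h_sum
  rw [map_neg, h_tail, neg_zero, map_sum] at h_coeff
  simp only [coeff_smul, smul_eq_mul, coeff_kummerOperator, mul_sub,
    Finset.sum_sub_distrib] at h_coeff
  rw [coeff_koebeTransform _ _ (show m + 2 < m + 3 by lia),
    coeff_koebeTransform _ _ (show m < m + 3 by lia), Finset.mul_sum, Finset.mul_sum,
    ← sub_eq_zero, ← h_coeff]
  congr 1 <;> exact Finset.sum_congr rfl fun n _ => by ring

end KummerEquation

section KummerSeries

variable {K : Type*} [Field K]

lemma ordinaryHypergeometricCoefficient_zero (a b c : K) :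
    ordinaryHypergeometricCoefficient a b c 0 = 1 := by
  simp [ordinaryHypergeometricCoefficient]

variable [CharZero K]

lemma ordinaryHypergeometricCoefficient_succ (a b : K) {c : K} {n : ℕ} (hc : c + n ≠ 0) :
    (n + 1) * (c + n) * ordinaryHypergeometricCoefficient a b c (n + 1) =
      (a + n) * (b + n) * ordinaryHypergeometricCoefficient a b c n := by
  have hn : (n : K) + 1 ≠ 0 := n.cast_add_one_ne_zero
  simp only [ordinaryHypergeometricCoefficient, ascPochhammer_succ_eval, Nat.factorial_succ,
    Nat.cast_mul, Nat.cast_succ, mul_inv]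
  field_simp

/-- The Taylor series at `0` of `(1 - x) ^ (-2a) * ₂F₁(a, b; 2b; -4x / (1 - x) ^ 2)`. -/
noncomputable def kummerSeries (a b : K) : K⟦X⟧ :=
  koebeTransform (2 * a) fun n => (-4) ^ n * ordinaryHypergeometricCoefficient a b (2 * b) n

variable {b : K}

lemma kummerSeries_recurrence (a : K) (hb : ∀ n : ℕ, 2 * b ≠ -n) (m : ℕ) :
    (m + 2) * (m + 2 * b + 1) * coeff (m + 2) (kummerSeries a b) =
      (m + 2 * a) * (m + 2 * a - 2 * b + 1) * coeff m (kummerSeries a b) := by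
  refine koebeTransform_recurrence (fun n => ?_) m
  have h := ordinaryHypergeometricCoefficient_succ a b (mt eq_neg_of_add_eq_zero_left (hb n))
  rw [pow_succ]
  linear_combination (-4) * (-4) ^ n * h

lemma coeff_zero_kummerSeries (a b : K) : coeff 0 (kummerSeries a b) = 1 := by
  have h_pow : coeff 0 (koebePow (2 * a) 0) = 1 := by
    simpa only [Ring.multichoose_zero_right] using coeff_koebePow_add (2 * a) 0 0
  rw [kummerSeries, coeff_koebeTransform _ _ one_pos, Finset.sum_range_one, h_pow, pow_zero,
    ordinaryHypergeometricCoefficient_zero, one_mul, one_mul]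

lemma coeff_one_kummerSeries (a : K) (hb : b ≠ 0) : coeff 1 (kummerSeries a b) = 0 := by
  have h_pow0 : coeff 1 (koebePow (2 * a) 0) = 2 * a := by
    simpa [Ring.multichoose_one_right] using coeff_koebePow_add (2 * a) 0 1
  have h_pow1 : coeff 1 (koebePow (2 * a) 1) = 1 := by
    simpa [Ring.multichoose_zero_right] using coeff_koebePow_add (2 * a) 1 0
  have h_coeff : 2 * b * ordinaryHypergeometricCoefficient a b (2 * b) 1 = a * b := by
    have h := ordinaryHypergeometricCoefficient_succ a b (c := 2 * b) (n := 0) (by simpa using hb)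
    simpa only [Nat.cast_zero, add_zero, zero_add, one_mul, mul_one,
      ordinaryHypergeometricCoefficient_zero] using h
  rw [kummerSeries, coeff_koebeTransform _ _ (Nat.lt_add_one 1), Finset.sum_range_succ,
    Finset.sum_range_one, h_pow0, h_pow1, ordinaryHypergeometricCoefficient_zero]
  refine mul_left_cancel₀ hb ?_
  linear_combination -2 * h_coeff

lemma coeff_odd_kummerSeries (a : K) (hb : ∀ n : ℕ, 2 * b ≠ -n) (j : ℕ) :
    coeff (2 * j + 1) (kummerSeries a b) = 0 := by
  induction j with
  | zero => exact coeff_one_kummerSeries a fun h => hb 0 (by simp [h])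
  | succ j ih =>
    have hrec := kummerSeries_recurrence a hb (2 * j + 1)
    rw [ih, mul_zero] at hrec
    refine (mul_eq_zero.mp hrec).resolve_left (mul_ne_zero (by norm_cast) fun h => ?_)
    apply hb (2 * j + 2)
    push_cast at h ⊢
    linear_combination h

lemma coeff_even_kummerSeries (a : K) (hb : ∀ n : ℕ, 2 * b ≠ -n) (j : ℕ) :
    coeff (2 * j) (kummerSeries a b) =
      ordinaryHypergeometricCoefficient a (a - b + 1 / 2) (b + 1 / 2) j := by
  induction j with
  | zero => rw [mul_zero, coeff_zero_kummerSeries, ordinaryHypergeometricCoefficient_zero]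
  | succ j ih =>
    have hc : b + 1 / 2 + j ≠ 0 := fun h => hb (2 * j + 1) <| by
      push_cast
      linear_combination 2 * h
    have hj : (j : K) + 1 ≠ 0 := j.cast_add_one_ne_zero
    have hrec := kummerSeries_recurrence a hb (2 * j)
    have hcoeff := ordinaryHypergeometricCoefficient_succ a (a - b + 1 / 2) hc
    rw [ih] at hrec
    push_cast at hrec
    refine mul_left_cancel₀ (mul_ne_zero hj hc) ?_
    linear_combination hrec / 4 - hcoeff

end KummerSeries

end Formal

section Analytic

open PowerSeries

lemma abs_multichoose_le {s t : ℝ} (h : |s| ≤ t) (k : ℕ) :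
    |Ring.multichoose s k| ≤ Ring.multichoose t k := by
  induction k generalizing s t with
  | zero => simp
  | succ k ih =>
    have h1 : |s + 1| ≤ t + 1 := (abs_add_le s 1).trans (by rw [abs_one]; gcongr)
    have hk : (0 : ℝ) < k + 1 := k.cast_add_one_pos
    refine le_of_mul_le_mul_left ?_ hk
    calc (k + 1) * |Ring.multichoose s (k + 1)|
        = |s| * |Ring.multichoose (s + 1) k| := by
          rw [← abs_of_pos hk, ← abs_mul, succ_mul_multichoose_succ, abs_mul]
      _ ≤ t * Ring.multichoose (t + 1) k :=
          mul_le_mul h (ih h1) (abs_nonneg _) ((abs_nonneg s).trans h)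
      _ = (k + 1) * Ring.multichoose t (k + 1) := (succ_mul_multichoose_succ t k).symm

lemma abs_coeff_koebePow_le (s : ℝ) (n m : ℕ) :
    |coeff m (koebePow s n)| ≤ coeff m (koebePow |s| n) := by
  rcases lt_or_ge m n with h | h
  · simp only [coeff_koebePow_of_lt _ h, abs_zero, le_refl]
  · obtain ⟨k, rfl⟩ := Nat.exists_eq_add_of_le' h
    rw [coeff_koebePow_add, coeff_koebePow_add]
    refine abs_multichoose_le ((abs_add_le _ _).trans_eq ?_) k
    rw [abs_of_nonneg (by positivity : (0 : ℝ) ≤ 2 * n)]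

lemma hasSum_negBinomialSeries (s : ℝ) {x : ℝ} (hx : |x| < 1) :
    HasSum (fun k => coeff k (negBinomialSeries s) * x ^ k) ((1 - x) ^ (-s)) := by
  have h := (Real.one_div_one_sub_rpow_hasFPowerSeriesOnBall_zero s).hasSum (y := x)
    (by simpa [Metric.mem_eball, edist_dist, Real.dist_eq] using hx)
  rw [Real.rpow_neg (by linarith [(abs_lt.mp hx).2]), ← one_div]
  simpa [coeff_negBinomialSeries, Ring.multichoose_eq, mul_comm] using h

lemma hasSum_koebePow (s : ℝ) (n : ℕ) {x : ℝ} (hx : |x| < 1) :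
    HasSum (fun m => coeff m (koebePow s n) * x ^ m)
      ((1 - x) ^ (-s) * (x / (1 - x) ^ 2) ^ n) := by
  have hx1 : 0 < 1 - x := by linarith [(abs_lt.mp hx).2]
  have h_rpow : (1 - x) ^ (-(s + 2 * n)) = (1 - x) ^ (-s) / ((1 - x) ^ 2) ^ n := by
    rw [neg_add, ← sub_eq_add_neg, Real.rpow_sub hx1, ← pow_mul, ← Real.rpow_natCast]
    push_cast
    rfl
  rw [← (add_left_injective n).hasSum_iff fun m hm => ?_]
  · convert! (hasSum_negBinomialSeries (s + 2 * n) hx).mul_left (x ^ n) using 1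
    · funext k
      simp only [Function.comp_apply, coeff_koebePow_add, coeff_negBinomialSeries, pow_add]
      ring
    · rw [h_rpow, div_pow]
      ring
  · have hmn : m < n := by
      by_contra! h
      exact hm ⟨m - n, Nat.sub_add_cancel h⟩
    rw [coeff_koebePow_of_lt _ hmn, zero_mul]

lemma summable_mul_coeff_koebePow (s : ℝ) {u : ℕ → ℝ} {x : ℝ} (hx : |x| < 1)
    (hu : Summable fun n => |u n| * (|x| / (1 - |x|) ^ 2) ^ n) :
    Summable fun p : ℕ × ℕ => u p.1 * (coeff p.2 (koebePow s p.1) * x ^ p.2) := by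
  let g (p : ℕ × ℕ) : ℝ := |u p.1| * (coeff p.2 (koebePow |s| p.1) * |x| ^ p.2)
  have hg_nonneg : 0 ≤ g := fun p =>
    mul_nonneg (abs_nonneg _) <| mul_nonneg
      ((abs_nonneg _).trans (abs_coeff_koebePow_le s p.1 p.2)) (by positivity)
  have hg_row (n : ℕ) : HasSum (fun m => g (n, m))
      (|u n| * ((1 - |x|) ^ (-|s|) * (|x| / (1 - |x|) ^ 2) ^ n)) :=
    (hasSum_koebePow |s| n (by rwa [abs_abs])).mul_left _
  have hg : Summable g := by
    refine (summable_prod_of_nonneg hg_nonneg).mpr ⟨fun n => (hg_row n).summable, ?_⟩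
    refine (hu.mul_left ((1 - |x|) ^ (-|s|))).congr fun n => ?_
    rw [(hg_row n).tsum_eq, mul_left_comm]
  refine hg.of_norm_bounded fun p => ?_
  rw [Real.norm_eq_abs, abs_mul, abs_mul, abs_pow]
  have h_coeff := abs_coeff_koebePow_le s p.1 p.2
  simp only [g]
  gcongr

theorem hasSum_koebeTransform (s : ℝ) {u : ℕ → ℝ} {x : ℝ} (hx : |x| < 1)
    (hu : Summable fun n => |u n| * (|x| / (1 - |x|) ^ 2) ^ n) :
    HasSum (fun m => coeff m (koebeTransform s u) * x ^ m)
      ((1 - x) ^ (-s) * ∑' n, u n * (x / (1 - x) ^ 2) ^ n) := by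
  have h_sum := (summable_mul_coeff_koebePow s hx hu).hasSum
  have h_row (n : ℕ) := (hasSum_koebePow s n hx).mul_left (u n)
  have h_col (m : ℕ) : HasSum (fun n => u n * (coeff m (koebePow s n) * x ^ m))
      (coeff m (koebeTransform s u) * x ^ m) := by
    rw [coeff_koebeTransform s u m.lt_succ_self, Finset.sum_mul]
    simp only [mul_assoc]
    refine hasSum_sum_of_ne_finset_zero fun n hn => ?_
    rw [coeff_koebePow_of_lt s (by simpa using hn), zero_mul, mul_zero]
  convert! ((Equiv.prodComm ℕ ℕ).hasSum_iff.mpr h_sum).prod_fiberwise h_col using 1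
  rw [← (h_sum.prod_fiberwise h_row).tsum_eq, ← tsum_mul_left]
  exact tsum_congr fun n => mul_left_comm _ _ _

lemma one_le_radius_ordinaryHypergeometricSeries (a b c : ℝ) :
    1 ≤ (ordinaryHypergeometricSeries ℝ a b c).radius := by
  by_cases h : ∀ k : ℕ, (k : ℝ) ≠ -a ∧ (k : ℝ) ≠ -b ∧ (k : ℝ) ≠ -c
  · exact (ordinaryHypergeometricSeries_radius_eq_one ℝ a b c h).ge
  · obtain ⟨k, hk⟩ : ∃ k : ℕ, a = -k ∨ b = -k ∨ c = -k := by
      push Not at h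
      grind
    rcases hk with rfl | rfl | rfl
    · simp [ordinaryHypergeometric_radius_top_of_neg_nat₁]
    · simp [ordinaryHypergeometric_radius_top_of_neg_nat₂]
    · simp [ordinaryHypergeometric_radius_top_of_neg_nat₃]

lemma summable_abs_ordinaryHypergeometricCoefficient_mul_pow (a b c : ℝ) {z : ℝ} (hz : |z| < 1) :
    Summable fun n => |ordinaryHypergeometricCoefficient a b c n * z ^ n| := by
  have hz' : z ∈ Metric.eball 0 (ordinaryHypergeometricSeries ℝ a b c).radius :=
    Metric.eball_subset_eball (one_le_radius_ordinaryHypergeometricSeries a b c)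
      (by simpa [Metric.mem_eball, edist_dist, Real.dist_eq] using hz)
  refine (FormalMultilinearSeries.summable_norm_apply _ hz').congr fun n => ?_
  rw [ordinaryHypergeometricSeries_apply_eq, smul_eq_mul, Real.norm_eq_abs]

lemma hyp2F1_eq_tsum (a b c z : ℝ) :
    hyp2F1 a b c z = ∑' n, ordinaryHypergeometricCoefficient a b c n * z ^ n := by
  refine tsum_congr fun n => ?_
  rw [rpoch, rpoch, rpoch, ordinaryHypergeometricCoefficient, div_eq_mul_inv, mul_inv]
  ring

lemma four_mul_div_one_sub_sq_lt_one {r : ℝ} (hr : r < 3 - 2 * √2) : 4 * (r / (1 - r) ^ 2) < 1 := by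
  have h_sq : √2 ^ 2 = 2 := Real.sq_sqrt zero_le_two
  have h_sqrt : 1 < √2 := Real.one_lt_sqrt_two
  have hr1 : 0 < 1 - r := by linarith
  rw [← mul_div_assoc, div_lt_one (by positivity)]
  nlinarith

lemma hasSum_kummerSeries_mul_pow (a b : ℝ) {x : ℝ} (hx : |x| < 3 - 2 * √2) :
    HasSum (fun m => coeff m (kummerSeries a b) * x ^ m)
      ((1 - x) ^ (-(2 * a)) * hyp2F1 a b (2 * b) (-4 * (x / (1 - x) ^ 2))) := by
  have hx1 : |x| < 1 := hx.trans (by linarith [Real.one_lt_sqrt_two])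
  have h_nonneg : 0 ≤ |x| / (1 - |x|) ^ 2 := by positivity
  have h_lt : |-4 * (|x| / (1 - |x|) ^ 2)| < 1 := by
    rw [neg_mul, abs_neg, abs_of_nonneg (by positivity)]
    exact four_mul_div_one_sub_sq_lt_one hx
  have hu : Summable fun n =>
      |(-4) ^ n * ordinaryHypergeometricCoefficient a b (2 * b) n| * (|x| / (1 - |x|) ^ 2) ^ n := by
    refine (summable_abs_ordinaryHypergeometricCoefficient_mul_pow a b (2 * b) h_lt).congr
      fun n => ?_
    rw [mul_pow, ← mul_assoc, abs_mul, abs_of_nonneg (pow_nonneg h_nonneg n),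
      mul_comm ((-4 : ℝ) ^ n)]
  have h_eq : hyp2F1 a b (2 * b) (-4 * (x / (1 - x) ^ 2)) =
      ∑' n, (-4) ^ n * ordinaryHypergeometricCoefficient a b (2 * b) n * (x / (1 - x) ^ 2) ^ n := by
    rw [hyp2F1_eq_tsum]
    exact tsum_congr fun n => by rw [mul_pow]; ring
  rw [h_eq]
  exact hasSum_koebeTransform (2 * a) hx1 hu

lemma hasSum_kummerSeries_mul_pow_of_even (a : ℝ) {b x : ℝ} (hb : ∀ n : ℕ, 2 * b ≠ -n)
    (hx : |x| < 1) :
    HasSum (fun m => coeff m (kummerSeries a b) * x ^ m)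
      (hyp2F1 a (a - b + 1 / 2) (b + 1 / 2) (x ^ 2)) := by
  have hx2 : |x ^ 2| < 1 := by
    rw [abs_pow]
    exact pow_lt_one₀ (abs_nonneg x) hx two_ne_zero
  have h_inj : Function.Injective fun j : ℕ => 2 * j := mul_right_injective₀ two_ne_zero
  rw [← h_inj.hasSum_iff fun m hm => ?_, hyp2F1_eq_tsum]
  · convert! (summable_abs_ordinaryHypergeometricCoefficient_mul_pow a (a - b + 1 / 2) (b + 1 / 2)
      hx2).of_abs.hasSum using 2 with j
    rw [Function.comp_apply, coeff_even_kummerSeries a hb, pow_mul]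
  · obtain ⟨j, rfl | rfl⟩ := m.even_or_odd'
    · exact absurd ⟨j, rfl⟩ hm
    · rw [coeff_odd_kummerSeries a hb, zero_mul]

theorem hyp2F1_quadratic_transformation (a : ℝ) {b x : ℝ} (hb : ∀ n : ℕ, 2 * b ≠ -n)
    (hx : |x| < 3 - 2 * √2) :
    hyp2F1 a b (2 * b) (-4 * (x / (1 - x) ^ 2)) =
      (1 - x) ^ (2 * a) * hyp2F1 a (a - b + 1 / 2) (b + 1 / 2) (x ^ 2) := by
  have hx1 : |x| < 1 := hx.trans (by linarith [Real.one_lt_sqrt_two])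
  have h_pos : 0 < 1 - x := by linarith [(abs_lt.mp hx1).2]
  have h_eq := (hasSum_kummerSeries_mul_pow_of_even a hb hx1).unique
    (hasSum_kummerSeries_mul_pow a b hx)
  rw [h_eq, ← mul_assoc, ← Real.rpow_add h_pos, add_neg_cancel, Real.rpow_zero, one_mul]

end Analytic

theorem statement6_general (β₁ β₂ Λ : ℝ) (hβ₂ : ∀ n : ℕ, 2 * β₂ ≠ -n)
    (hΛ : |Λ| < 3 - 2 * Real.sqrt 2) :
    hyp2F1 (β₁ + β₂ - 1 / 2) β₂ (2 * β₂) (1 - ((1 + Λ) / (1 - Λ)) ^ 2) =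
      (1 - Λ) ^ (2 * β₁ + 2 * β₂ - 1) *
      hyp2F1 (β₁ + β₂ - 1 / 2) β₁ (β₂ + 1 / 2) (Λ ^ 2) := by
  have h_ne : 1 - Λ ≠ 0 := by linarith [(abs_lt.mp hΛ).2, Real.one_lt_sqrt_two]
  have h_arg : 1 - ((1 + Λ) / (1 - Λ)) ^ 2 = -4 * (Λ / (1 - Λ) ^ 2) := by
    field_simp
    ring
  rw [h_arg, hyp2F1_quadratic_transformation _ hβ₂ hΛ]
  congr 2 <;> ring

/-- Kummer's second quadratic identity. -/
theorem statement6 (β₁ β₂ Λ : ℝ) (hβ₁ : 0 < β₁) (hβ₂ : 0 < β₂)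
    (hΛ0 : 0 < Λ) (hΛ1 : Λ < 3 - 2 * Real.sqrt 2) :
    hyp2F1 (β₁ + β₂ - 1 / 2) β₂ (2 * β₂) (1 - ((1 + Λ) / (1 - Λ)) ^ 2) =
      (1 - Λ) ^ (2 * β₁ + 2 * β₂ - 1) *
      hyp2F1 (β₁ + β₂ - 1 / 2) β₁ (β₂ + 1 / 2) (Λ ^ 2) :=
  statement6_general β₁ β₂ Λ (fun n => by linarith [n.cast_nonneg (α := ℝ)])
    (by rwa [abs_of_pos hΛ0])
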